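/- Let p be a prime (p = 2 in case ε = −1), let r ≥ 0 and s ≥ 0 be integers, let ε = ±1, and consider the group G = ⟨a, b; b⁻¹a^{p^r}b = a^{ε p^r}⟩ with A and B the cyclic subgroups generated by a and b respectively, A₁ = A^{p^s}, and φ : A₁ → B the isomorphism defined by φ(a^{p^s}) = b. Then the family of all normal (A₁,B,φ)-compatible subgroups of G of finite p-power index is an (A₁,B)-filtration. -/

import Mathlib

/-- A subgroup `H` of `G` is `(A,B,φ)`-compatible if `φ(A ∩ H) = B ∩ H`. -/
def Compatible {G : Type*} [Group G] {A B : Subgroup G} (φ : A ≃* B) (H : Subgroup G) : Prop :=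
  (H.subgroupOf A).map φ.toMonoidHom = H.subgroupOf B

/-- The single relator `b⁻¹aˡb·a⁻ᵐ` of the Baumslag–Solitar group `G(l,m)`,
with `a = FreeGroup.of 0` and `b = FreeGroup.of 1`. -/
def bsRels (l m : ℤ) : Set (FreeGroup (Fin 2)) :=
  {(FreeGroup.of 1)⁻¹ * (FreeGroup.of 0) ^ l * FreeGroup.of 1 * ((FreeGroup.of 0) ^ m)⁻¹}

/-- The Baumslag–Solitar group `G(l,m) = ⟨a, b; b⁻¹aˡb = aᵐ⟩`. -/
def BS (l m : ℤ) : Type := PresentedGroup (bsRels l m)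

instance (l m : ℤ) : Group (BS l m) := by delta BS; infer_instance

/-- The generator `a` of `BS l m`. -/
def BS.a (l m : ℤ) : BS l m := PresentedGroup.of (0 : Fin 2)

/-- The generator `b` of `BS l m`. -/
def BS.b (l m : ℤ) : BS l m := PresentedGroup.of (1 : Fin 2)

/-!
Write `G` for the group in question and call a subgroup `p`-separable if it is closed in the pro-`p`
topology. Everything rests on two families of homomorphisms.

* Let `Q` be cyclic of order `p ^ r`, generated by `q`. The homomorphism `G → FreeGroup Q ⋊ Q` with
  `a ↦ q` and `b ↦ FreeGroup.of 1` has kernel the normal subgroup `⟨a ^ p ^ r⟩`, hence `⟨a⟩` is the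
  preimage of `Q`. Free groups are residually finite `p`-groups (by unitriangular matrices over
  `ZMod p`), therefore `Q` is `p`-separable in the semidirect product, and `⟨a⟩` is so in `G`.
* As `ε ^ p = 1`, the group `G` maps onto metacyclic groups `ZMod (p ^ u) ⋊ ZMod (p ^ n)`, whose
  kernels meet `⟨a⟩` in `⟨a ^ p ^ u⟩` and `⟨b⟩` in `⟨b ^ p ^ n⟩`.

The second family cuts `⟨a ^ p ^ s⟩` out of `⟨a⟩`; letting `s` grow, `⊥` is `p`-separable, and so
is the retract `⟨b⟩`. If `M` is normal of index `p ^ t`, intersecting `M` with the metacyclic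
kernel for `u = s + t + 1` and `n = t + 1` gives a compatible subgroup, because `M` contains all
`p ^ t`-th powers. Thus the compatible subgroups are cofinal among all normal subgroups of
`p`-power index.
-/

section PSeparability

variable {G H : Type*} [Group G] [Group H] {p : ℕ}

/-- `N` is a normal subgroup whose index is a power of `p`, that is, a member of the standard
neighbourhood basis of `1` in the pro-`p` topology. -/
structure IsNormalOfPPowerIndex (p : ℕ) (N : Subgroup G) : Prop where
  normal : N.Normal
  exists_index_eq : ∃ k : ℕ, N.index = p ^ k

/-- `H` is an intersection of subgroups `H ⊔ N` with `N` normal of `p`-power index, that is, `H` is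
closed in the pro-`p` topology. For `H = ⊥` this says that the group is residually a finite
`p`-group. -/
def IsPSeparable (p : ℕ) (H : Subgroup G) : Prop :=
  ∀ g ∉ H, ∃ N : Subgroup G, IsNormalOfPPowerIndex p N ∧ g ∉ H ⊔ N

namespace IsNormalOfPPowerIndex

variable [Fact p.Prime]

theorem inf {M N : Subgroup G} (hM : IsNormalOfPPowerIndex p M)
    (hN : IsNormalOfPPowerIndex p N) : IsNormalOfPPowerIndex p (M ⊓ N) := by
  have := hM.normal
  have := hN.normal
  obtain ⟨i, hi⟩ := hM.exists_index_eq
  obtain ⟨j, hj⟩ := hN.exists_index_eq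
  obtain ⟨t, -, ht⟩ := (Nat.dvd_prime_pow Fact.out).1
    (hi ▸ Subgroup.relIndex_dvd_index_of_normal M N)
  refine ⟨inferInstance, t + j, ?_⟩
  rw [← Subgroup.relIndex_mul_index (inf_le_right : M ⊓ N ≤ N), Subgroup.inf_relIndex_right, ht, hj,
    pow_add]

theorem comap {N : Subgroup H} (hN : IsNormalOfPPowerIndex p N) (f : G →* H) :
    IsNormalOfPPowerIndex p (N.comap f) := by
  have := hN.normal
  obtain ⟨i, hi⟩ := hN.exists_index_eq
  obtain ⟨t, -, ht⟩ := (Nat.dvd_prime_pow Fact.out).1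
    (hi ▸ Subgroup.relIndex_dvd_index_of_normal N f.range)
  exact ⟨inferInstance, t, by rw [Subgroup.index_comap, ht]⟩

end IsNormalOfPPowerIndex

theorem isNormalOfPPowerIndex_ker [Fact p.Prime] [Finite H] (hH : IsPGroup p H) (f : G →* H) :
    IsNormalOfPPowerIndex p f.ker :=
  ⟨inferInstance, by
    rw [Subgroup.index_ker]
    exact IsPGroup.iff_card.1 (hH.to_subgroup f.range)⟩

namespace IsPSeparable

theorem of_isNormalOfPPowerIndex {N : Subgroup G} (hN : IsNormalOfPPowerIndex p N) :
    IsPSeparable p N :=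
  fun g hg => ⟨N, hN, by rwa [sup_idem]⟩

theorem iInf {ι : Sort*} {K : ι → Subgroup G} (h : ∀ i, IsPSeparable p (K i)) :
    IsPSeparable p (⨅ i, K i) := by
  intro g hg
  obtain ⟨i, hi⟩ := not_forall.1 (mt Subgroup.mem_iInf.2 hg)
  obtain ⟨N, hN, hgN⟩ := h i g hi
  exact ⟨N, hN, fun hg' => hgN (sup_le_sup_right (iInf_le K i) N hg')⟩

theorem inf {K L : Subgroup G} (hK : IsPSeparable p K) (hL : IsPSeparable p L) :
    IsPSeparable p (K ⊓ L) := by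
  rw [inf_eq_iInf]
  exact iInf (Bool.forall_bool.2 ⟨hL, hK⟩)

theorem comap [Fact p.Prime] {K : Subgroup H} (hK : IsPSeparable p K) (f : G →* H) :
    IsPSeparable p (K.comap f) := by
  intro g hg
  obtain ⟨N, hN, hgN⟩ := hK (f g) hg
  refine ⟨N.comap f, hN.comap f, fun hg' => hgN ?_⟩
  exact sup_le (Subgroup.comap_mono le_sup_left) (Subgroup.comap_mono le_sup_right) hg'

theorem of_retraction [Fact p.Prime] (hG : IsPSeparable p (⊥ : Subgroup G)) {K : Subgroup G}
    (ρ : G →* K) (hρ : ∀ x : K, ρ x = x) : IsPSeparable p K := by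
  intro g hg
  have hne : (ρ g : G)⁻¹ * g ∉ (⊥ : Subgroup G) := fun h =>
    hg (inv_mul_eq_one.1 (Subgroup.mem_bot.1 h) ▸ (ρ g).2)
  obtain ⟨N, hN, hgN⟩ := hG _ hne
  rw [bot_sup_eq] at hgN
  have := hN.normal
  refine ⟨N ⊓ N.comap (K.subtype.comp ρ), hN.inf (hN.comap _), fun h => hgN ?_⟩
  obtain ⟨x, hx, n, ⟨hn, hρn⟩, rfl⟩ := Subgroup.mem_sup_of_normal_right.1 h
  have hρx : ρ x = ⟨x, hx⟩ := hρ ⟨x, hx⟩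
  simpa [hρx, mul_assoc] using N.mul_mem (N.inv_mem hρn) hn

theorem iInf_sup_eq {K : Subgroup G} (hK : IsPSeparable p K) {S : Set (Subgroup G)}
    (hS : ∀ M, IsNormalOfPPowerIndex p M → ∃ N ∈ S, N ≤ M) : ⨅ N ∈ S, K ⊔ N = K := by
  refine le_antisymm (fun g hg => ?_) (le_iInf₂ fun N _ => le_sup_left)
  by_contra hgK
  obtain ⟨M, hM, hgM⟩ := hK g hgK
  obtain ⟨N, hN, hNM⟩ := hS M hM
  have hle : ⨅ N ∈ S, K ⊔ N ≤ K ⊔ M := iInf₂_le_of_le N hN (sup_le_sup_left hNM K)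
  exact hgM (hle hg)

end IsPSeparable

end PSeparability

section Unitriangular

theorem isPGroup_ker_unitsMap {A B : Type*} [Ring A] [Ring B] {p : ℕ} [Fact p.Prime] [CharP A p]
    (f : A →+* B) (hf : ∀ x, f x = 0 → IsNilpotent x) :
    IsPGroup p (Units.map (f : A →* B)).ker := by
  rintro ⟨u, hu⟩
  have hfu : f u = 1 := congrArg Units.val hu
  obtain ⟨k, hk⟩ := hf (u - 1) (by rw [map_sub, hfu, map_one, sub_self])
  refine ⟨k, Subtype.ext (Units.ext ?_)⟩
  have h := sub_pow_char_pow_of_commute p k (Commute.one_right (u : A))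
  rw [pow_eq_zero_of_le (Nat.lt_pow_self (Fact.out : p.Prime).one_lt).le hk, one_pow] at h
  simpa using (sub_eq_zero.1 h.symm)

variable {n R : Type*} [Fintype n] [LinearOrder n] [CommRing R]

theorem mul_apply_self_of_isUpperTriangular {M N : Matrix n n R} (hM : M.IsUpperTriangular)
    (hN : N.IsUpperTriangular) (i : n) : (M * N) i i = M i i * N i i := by
  rw [Matrix.mul_apply]
  refine Finset.sum_eq_single_of_mem i (Finset.mem_univ i) fun j _ hji => ?_
  rcases hji.lt_or_gt with h | h
  · rw [hM h, zero_mul]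
  · rw [hN h, mul_zero]

theorem isNilpotent_of_isUpperTriangular {M : Matrix n n R} (hM : M.IsUpperTriangular)
    (h0 : ∀ i, M i i = 0) : IsNilpotent M := by
  refine ⟨Fintype.card n, ?_⟩
  have h := M.aeval_self_charpoly
  simpa [Matrix.charpoly_of_isUpperTriangular M hM, h0] using h

variable (n R) in
/-- The ring homomorphism taking an upper triangular matrix to its diagonal. -/
def diagonalHom : Matrix.blockTriangularSubalgebra R R (id : n → n) →+* (n → R) where
  toFun M := M.1.diag
  map_one' := by ext; simp
  map_mul' M N := by ext i; exact mul_apply_self_of_isUpperTriangular M.2 N.2 i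
  map_zero' := by ext; simp
  map_add' M N := by ext; simp

variable (n R) in
/-- The group of upper triangular matrices with ones on the diagonal. Its elements are units of the
ring of upper triangular matrices, so that inverses are upper triangular by construction. -/
def upperUnitriangular : Subgroup (Matrix.blockTriangularSubalgebra R R (id : n → n))ˣ :=
  (Units.map (diagonalHom n R : _ →* n → R)).ker

variable (n R) in
/-- The underlying matrix of an upper unitriangular matrix, as a monoid homomorphism. -/
def upperUnitriangularToMatrix : upperUnitriangular n R →* Matrix n n R :=
  ((Matrix.blockTriangularSubalgebra R R (id : n → n)).val : _ →* Matrix n n R).comp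
    ((Units.coeHom _).comp (upperUnitriangular n R).subtype)

theorem isNilpotent_of_diagonalHom_eq_zero
    {M : Matrix.blockTriangularSubalgebra R R (id : n → n)} (hM : diagonalHom n R M = 0) :
    IsNilpotent M :=
  (IsNilpotent.map_iff (f := (Matrix.blockTriangularSubalgebra R R id).val)
    Subtype.val_injective).1 <| isNilpotent_of_isUpperTriangular M.2 (congrFun hM)

theorem exists_upperUnitriangularToMatrix_eq {M : Matrix n n R} (hM : M.IsUpperTriangular)
    (h1 : M.diag = 1) : ∃ g, upperUnitriangularToMatrix n R g = M := by
  let x : Matrix.blockTriangularSubalgebra R R (id : n → n) := ⟨M, hM⟩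
  have hx : diagonalHom n R x = 1 := h1
  have hu : IsUnit x := by
    rw [← add_sub_cancel 1 x]
    exact (isNilpotent_of_diagonalHom_eq_zero
      (by rw [map_sub, hx, map_one, sub_self])).isUnit_one_add
  exact ⟨⟨hu.unit, Units.ext hx⟩, rfl⟩

theorem isPGroup_upperUnitriangular {p : ℕ} [Fact p.Prime] [CharP R p] [Nonempty n] :
    IsPGroup p (upperUnitriangular n R) :=
  have : CharP (Matrix.blockTriangularSubalgebra R R (id : n → n)) p :=
    RingHom.charP (Matrix.blockTriangularSubalgebra R R (id : n → n)).val.toRingHom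
      Subtype.val_injective p
  isPGroup_ker_unitsMap _ fun _ => isNilpotent_of_diagonalHom_eq_zero

end Unitriangular

section FreeGroupSeparability

open Matrix

section Bidiagonal

variable {R : Type*} [CommRing R] {n : ℕ}

/-- The upper bidiagonal matrix with ones on the diagonal and superdiagonal `d`. -/
def unitBidiagonal (d : Fin n → R) : Matrix (Fin (n + 1)) (Fin (n + 1)) R :=
  1 + Matrix.of fun i => Fin.cases 0 fun k => if i = k.castSucc then d k else 0

theorem isUpperTriangular_unitBidiagonal (d : Fin n → R) :
    (unitBidiagonal d).IsUpperTriangular := by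
  refine Matrix.blockTriangular_one.add fun i j hij => ?_
  cases j using Fin.cases with
  | zero => simp
  | succ k => simpa using fun h : i = k.castSucc => absurd hij (h ▸ k.castSucc_lt_succ.not_gt)

theorem diag_unitBidiagonal (d : Fin n → R) : (unitBidiagonal d).diag = 1 := by
  ext i
  cases i using Fin.cases with
  | zero => simp [unitBidiagonal]
  | succ k => simp [unitBidiagonal, k.castSucc_lt_succ.ne']

theorem vecMul_unitBidiagonal_succ (v : Fin (n + 1) → R) (d : Fin n → R) (k : Fin n) :
    (v ᵥ* unitBidiagonal d) k.succ = v k.succ + v k.castSucc * d k := by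
  rw [unitBidiagonal, Matrix.vecMul_add, Matrix.vecMul_one]
  simp [Matrix.vecMul, dotProduct]

/-- `v` has last nonzero entry `1`, in position `k`. Positions count the letters of a reduced word
read so far. -/
def LeadsAt (v : Fin (n + 1) → R) (k : Fin (n + 1)) : Prop :=
  v k = 1 ∧ ∀ j > k, v j = 0

theorem LeadsAt.succ {v t : Fin (n + 1) → R} {k : Fin n} (hv : LeadsAt v k.castSucc)
    {d e : Fin n → R} (hd : d k = 1) (he : e k = 0) (he' : ∀ j : Fin n, (j : ℕ) = k + 1 → e j = 0)
    (h : t ᵥ* unitBidiagonal e = v ᵥ* unitBidiagonal d) : LeadsAt t k.succ := by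
  have hrec (j : Fin n) : t j.succ + t j.castSucc * e j = v j.succ + v j.castSucc * d j := by
    rw [← vecMul_unitBidiagonal_succ, h, vecMul_unitBidiagonal_succ]
  have hk := hrec k
  rw [he, hd, hv.1, hv.2 _ k.castSucc_lt_succ] at hk
  refine ⟨by simpa using hk, fun j => ?_⟩
  induction j using Fin.induction with
  | zero => simp
  | succ j ih =>
    intro hj
    have hkj : k < j := Fin.succ_lt_succ_iff.1 hj
    have hj' : k.castSucc < j.castSucc := Fin.castSucc_lt_castSucc_iff.2 hkj
    have ht : t j.castSucc * e j = 0 := by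
      rcases (Nat.succ_le_of_lt hkj).eq_or_lt with hkj' | hkj'
      · rw [he' j hkj'.symm, mul_zero]
      · rw [ih hkj', zero_mul]
    simpa [ht, hv.2 _ hj', hv.2 _ (hj'.trans j.castSucc_lt_succ)] using hrec j

end Bidiagonal

variable {X : Type*}

-- The letter `x` acts by `U (x, true) * (U (x, false))⁻¹`, its inverse by the same formula with the
-- factors exchanged. The new row vector `t` is thus determined by `t * U (x, !b) = v * U (x, b)`,
-- without computing an inverse matrix. Reducedness of `L` keeps `(x, !b)` from occurring next.
theorem leadsAt_vecMul_lift_mk_take [DecidableEq X] {R : Type*} [CommRing R] {G : Type*} [Group G]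
    {L : List (X × Bool)} (hL : FreeGroup.IsReduced L)
    (τ : G →* Matrix (Fin (L.length + 1)) (Fin (L.length + 1)) R) (U : X × Bool → G)
    (hU : ∀ ℓ, τ (U ℓ) = unitBidiagonal fun i => if L.get i = ℓ then 1 else 0)
    (k : Fin (L.length + 1)) :
    LeadsAt (Pi.single 0 1 ᵥ* τ (FreeGroup.lift (fun x => U (x, true) * (U (x, false))⁻¹)
      (FreeGroup.mk (L.take k)))) k := by
  set f : FreeGroup X →* G := FreeGroup.lift fun x => U (x, true) * (U (x, false))⁻¹
  have hf (x : X) (b : Bool) : f (FreeGroup.mk [(x, b)]) = U (x, b) * (U (x, !b))⁻¹ := by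
    cases b <;> simp [f, FreeGroup.lift_mk]
  induction k using Fin.induction with
  | zero =>
    have h1 : f (FreeGroup.mk (L.take ((0 : Fin (L.length + 1)) : ℕ))) = 1 := by
      simp [← FreeGroup.one_eq_mk]
    rw [h1, map_one, Matrix.vecMul_one]
    exact ⟨Pi.single_eq_same 0 1, fun j hj => Pi.single_eq_of_ne hj.ne' 1⟩
  | succ k ih =>
    rcases hx : L.get k with ⟨x, b⟩
    refine ih.succ (d := fun i => if L.get i = (x, b) then 1 else 0)
      (e := fun i => if L.get i = (x, !b) then 1 else 0) (if_pos hx)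
      (if_neg fun h => by simpa using hx.symm.trans h) ?_ ?_
    · intro j hj
      refine if_neg fun hxj => ?_
      have hred := List.isChain_iff_getElem.1 hL k (by lia)
      simp only [List.get_eq_getElem, hj] at hx hxj
      simp [hx, hxj] at hred
    · have hk : L.take k.succ = L.take k.castSucc ++ [(x, b)] := by
        simp [← hx]
      rw [← hU, ← hU, Matrix.vecMul_vecMul, Matrix.vecMul_vecMul, ← map_mul, ← map_mul, hk,
        ← FreeGroup.mul_mk, map_mul f, hf, mul_assoc, inv_mul_cancel_right]

theorem isPSeparable_bot_freeGroup (p : ℕ) [Fact p.Prime] :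
    IsPSeparable p (⊥ : Subgroup (FreeGroup X)) := by
  classical
  intro w hw
  rw [Subgroup.mem_bot] at hw
  have hL : FreeGroup.IsReduced w.toWord := FreeGroup.isReduced_toWord
  choose U hU using fun ℓ : X × Bool =>
    exists_upperUnitriangularToMatrix_eq
      (isUpperTriangular_unitBidiagonal (R := ZMod p) fun i => if w.toWord.get i = ℓ then 1 else 0)
      (diag_unitBidiagonal _)
  have hlead := leadsAt_vecMul_lift_mk_take hL _ U hU (Fin.last _)
  rw [Fin.val_last, List.take_length, FreeGroup.mk_toWord] at hlead
  refine ⟨_, isNormalOfPPowerIndex_ker isPGroup_upperUnitriangular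
    (FreeGroup.lift fun x => U (x, true) * (U (x, false))⁻¹), fun h => ?_⟩
  rw [bot_sup_eq, MonoidHom.mem_ker] at h
  rw [h, map_one, Matrix.vecMul_one] at hlead
  have hlast : Fin.last w.toWord.length ≠ 0 := by simpa using hw
  simpa [hlast] using hlead.1

end FreeGroupSeparability

section Semidirect

variable {N P Q : Type*} [Group N] [Group P] [Group Q] {φ : Q →* MulAut N} {p : ℕ}

/-- The homomorphism into a wreath product induced by a homomorphism `ψ` on the normal factor: the
coordinate `x` of the base records `ψ` on the translate by `x⁻¹`. It makes up for `ψ.ker` not being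
`φ`-invariant. -/
def semidirectToWreath (φ : Q →* MulAut N) (ψ : N →* P) : N ⋊[φ] Q →* P ≀ᵣ Q where
  toFun g := ⟨fun x => ψ (φ x⁻¹ g.left), g.right⟩
  map_one' := by ext <;> simp
  map_mul' g h := RegularWreathProduct.ext (funext fun x => by simp [-map_inv]) rfl

theorem isPGroup_regularWreathProduct [Fact p.Prime] [Finite P] [Finite Q] (hP : IsPGroup p P)
    (hQ : IsPGroup p Q) : IsPGroup p (P ≀ᵣ Q) := by
  obtain ⟨i, hi⟩ := hP.exists_card_eq
  obtain ⟨j, hj⟩ := hQ.exists_card_eq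
  exact IsPGroup.of_card (n := i * p ^ j + j) (by
    rw [RegularWreathProduct.card, hi, hj, ← pow_mul, ← pow_add])

theorem isPSeparable_range_inr [Fact p.Prime] [Finite Q] (hQ : IsPGroup p Q)
    (hN : IsPSeparable p (⊥ : Subgroup N)) :
    IsPSeparable p (SemidirectProduct.inr : Q →* N ⋊[φ] Q).range := by
  intro g hg
  have hleft : g.left ∉ (⊥ : Subgroup N) := fun h =>
    hg ⟨g.right, SemidirectProduct.ext (Subgroup.mem_bot.1 h).symm rfl⟩
  obtain ⟨M, hM, hgM⟩ := hN _ hleft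
  rw [bot_sup_eq] at hgM
  have := hM.normal
  obtain ⟨k, hk⟩ := hM.exists_index_eq
  have : M.FiniteIndex := ⟨hk ▸ pow_ne_zero k (Fact.out : p.Prime).ne_zero⟩
  have hNM : IsPGroup p (N ⧸ M) := IsPGroup.of_card hk
  let f := semidirectToWreath φ (QuotientGroup.mk' M)
  refine ⟨f.ker, isNormalOfPPowerIndex_ker (isPGroup_regularWreathProduct hNM hQ) f, fun h => ?_⟩
  rw [← Subgroup.comap_map_eq] at h
  obtain ⟨_, ⟨q, rfl⟩, hq⟩ := h
  have hone := congrFun (congrArg RegularWreathProduct.left hq) 1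
  exact hgM ((QuotientGroup.eq_one_iff _).1
    (by simpa [f, semidirectToWreath, -map_inv] using hone.symm))

end Semidirect

section FreeGroupTranslation

/-- The left translation action of a group `Q` on the free group with basis `Q`. -/
def freeGroupTranslation (Q : Type*) [Group Q] : Q →* MulAut (FreeGroup Q) where
  toFun q := FreeGroup.freeGroupCongr (Equiv.mulLeft q)
  map_one' := by ext; simp
  map_mul' q q' := by ext; simp [FreeGroup.map.comp, Function.comp_def]

/-- The homomorphism out of `FreeGroup Q ⋊ Q` that restricts to `i` on `Q` and sends the basis
element `1` of `FreeGroup Q` to `h`. These exist because `FreeGroup Q ⋊ Q` is the free product of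
`Q` and an infinite cyclic group. -/
def freeGroupTranslationLift {Q H : Type*} [Group Q] [Group H] (i : Q →* H) (h : H) :
    FreeGroup Q ⋊[freeGroupTranslation Q] Q →* H :=
  SemidirectProduct.lift (FreeGroup.lift fun q => i q * h * (i q)⁻¹) i fun q => by
    ext
    simp [freeGroupTranslation, mul_assoc]

end FreeGroupTranslation

section Cyclic

theorem orderOf_ofAdd_one (k : ℕ) : orderOf (Multiplicative.ofAdd (1 : ZMod k)) = k := by
  rw [orderOf_ofAdd_eq_addOrderOf, ZMod.addOrderOf_one]

theorem mem_zpowers_ofAdd_one (k : ℕ) (x : Multiplicative (ZMod k)) :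
    x ∈ Subgroup.zpowers (Multiplicative.ofAdd (1 : ZMod k)) :=
  ⟨x.toAdd.cast, by simp [← ofAdd_zsmul]⟩

theorem isPGroup_multiplicative_zmod_pow (p k : ℕ) : IsPGroup p (Multiplicative (ZMod (p ^ k))) :=
  IsPGroup.of_card (n := k) (Nat.card_zmod _)

/-- The action of `±1` on a commutative group by identity and inversion. -/
def unitsZPow (C : Type*) [CommGroup C] : ℤˣ →* MulAut C where
  toFun ε :=
    { zpowGroupHom (ε : ℤ) with
      invFun := fun c => c ^ (ε : ℤ)
      left_inv := fun c => by simp [← zpow_mul]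
      right_inv := fun c => by simp [← zpow_mul] }
  map_one' := by ext; simp
  map_mul' ε δ := by ext; simp [zpow_mul, zpow_comm]

@[simp]
theorem unitsZPow_apply (C : Type*) [CommGroup C] (ε : ℤˣ) (c : C) :
    unitsZPow C ε c = c ^ (ε : ℤ) :=
  rfl

end Cyclic

section Compatibility

theorem compatible_iff {G : Type*} [Group G] {A B : Subgroup G} {φ : A ≃* B}
    {N : Subgroup G} : Compatible φ N ↔ ∀ x : A, (φ x : G) ∈ N ↔ (x : G) ∈ N := by
  rw [Compatible, MulEquiv.toMonoidHom_eq_coe, Subgroup.map_equiv_eq_comap_symm,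
    SetLike.ext_iff, φ.symm.forall_congr_left]
  simp [Subgroup.mem_subgroupOf, iff_comm]

theorem compatible_of_zpow_mem_iff {G : Type*} [Group G] {x y : G}
    {φ : Subgroup.zpowers x ≃* Subgroup.zpowers y}
    (hφ : (φ ⟨x, Subgroup.mem_zpowers x⟩ : G) = y) {N : Subgroup G}
    (hN : ∀ j : ℤ, x ^ j ∈ N ↔ y ^ j ∈ N) : Compatible φ N := by
  refine compatible_iff.2 ?_
  rintro ⟨_, j, rfl⟩
  have hj : (φ (⟨x, Subgroup.mem_zpowers x⟩ ^ j) : G) = y ^ j := by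
    rw [map_zpow, Subgroup.coe_zpow, hφ]
  exact hj ▸ (hN j).symm

end Compatibility

namespace BS

section Presentation

variable {l m : ℤ} {H : Type*} [Group H]

theorem inv_b_mul_a_zpow_mul_b : (b l m)⁻¹ * a l m ^ l * b l m = a l m ^ m := by
  have h : PresentedGroup.mk (bsRels l m) _ = 1 := PresentedGroup.one_of_mem (Set.mem_singleton _)
  simp only [map_mul, map_inv, map_zpow] at h
  exact mul_inv_eq_one.1 h

/-- The homomorphism out of `BS l m` determined by the images of the generators. -/
def lift (x y : H) (h : y⁻¹ * x ^ l * y = x ^ m) : BS l m →* H :=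
  PresentedGroup.toGroup (f := ![x, y]) (by rintro _ rfl; simp [h])

variable {x y : H} (h : y⁻¹ * x ^ l * y = x ^ m)

@[simp]
theorem lift_a : lift x y h (a l m) = x := PresentedGroup.toGroup.of _

@[simp]
theorem lift_b : lift x y h (b l m) = y := PresentedGroup.toGroup.of _

theorem hom_ext {f g : BS l m →* H} (ha : f (a l m) = g (a l m)) (hb : f (b l m) = g (b l m)) :
    f = g :=
  PresentedGroup.ext (Fin.forall_fin_two.2 ⟨ha, hb⟩)

theorem eq_top_of_mem {K : Subgroup (BS l m)} (ha : a l m ∈ K) (hb : b l m ∈ K) : K = ⊤ := by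
  let f : BS l m →* K := lift ⟨a l m, ha⟩ ⟨b l m, hb⟩ (Subtype.ext inv_b_mul_a_zpow_mul_b)
  have hf : K.subtype.comp f = MonoidHom.id (BS l m) := hom_ext (by simp [f]) (by simp [f])
  refine (Subgroup.eq_top_iff' K).2 fun g => ?_
  have hg : (f g : BS l m) = g := DFunLike.congr_fun hf g
  exact hg ▸ (f g).2

end Presentation

section ZpowersA

variable (l : ℤ) (ε : ℤˣ)

instance normal_zpowers_a_zpow : (Subgroup.zpowers (a l (ε * l) ^ l)).Normal := by
  rw [← Subgroup.normalizer_eq_top_iff]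
  refine eq_top_of_mem ?_ (inv_mem_iff.1 ?_)
  · rw [Subgroup.mem_normalizer_iff_map_conj_eq, MonoidHom.map_zpowers, MonoidHom.coe_coe,
      MulAut.conj_apply, (Commute.self_zpow _ l).eq, mul_inv_cancel_right]
  · rw [Subgroup.mem_normalizer_iff_map_conj_eq, MonoidHom.map_zpowers, MonoidHom.coe_coe,
      MulAut.conj_apply, inv_inv, inv_b_mul_a_zpow_mul_b, mul_comm, zpow_mul]
    rcases Int.units_eq_one_or ε with rfl | rfl <;> simp

end ZpowersA

section FreeGroupSemidirect

variable {l m : ℤ}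

/-- The homomorphism from `BS l m` to `FreeGroup Q ⋊ Q` that sends `a` to an element `q` of `Q` and
`b` to the basis element `1` of `FreeGroup Q`. -/
def toSemidirect {Q : Type*} [Group Q] (q : Q) (hl : q ^ l = 1) (hm : q ^ m = 1) :
    BS l m →* FreeGroup Q ⋊[freeGroupTranslation Q] Q :=
  lift (SemidirectProduct.inr q) (SemidirectProduct.inl (FreeGroup.of 1)) (by
    rw [← map_zpow, ← map_zpow, hl, hm, map_one, mul_one, inv_mul_cancel])

theorem freeGroupTranslationLift_comp_toSemidirect {Q H : Type*} [Group Q] [Group H]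
    (i : Q →* H) (q : Q) (hl : q ^ l = 1) (hm : q ^ m = 1) (f : BS l m →* H)
    (ha : f (a l m) = i q) :
    (freeGroupTranslationLift i (f (b l m))).comp (toSemidirect q hl hm) = f :=
  hom_ext (by simp [toSemidirect, freeGroupTranslationLift, ha])
    (by simp [toSemidirect, freeGroupTranslationLift])

theorem comap_toSemidirect_range_inr {Q H : Type*} [Group Q] [Group H] (i : Q →* H)
    (q : Q) (hl : q ^ l = 1) (hm : q ^ m = 1) (f : BS l m →* H) (ha : f (a l m) = i q)
    (hf : f.ker ≤ Subgroup.zpowers (a l m)) (hq : ∀ x, x ∈ Subgroup.zpowers q) :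
    SemidirectProduct.inr.range.comap (toSemidirect q hl hm) = Subgroup.zpowers (a l m) := by
  apply le_antisymm
  · rintro g ⟨x, hx⟩
    obtain ⟨k, rfl⟩ := hq x
    have hg := DFunLike.congr_fun (freeGroupTranslationLift_comp_toSemidirect i q hl hm f ha) g
    rw [MonoidHom.comp_apply, ← hx] at hg
    have hker : (a l m ^ k)⁻¹ * g ∈ f.ker := by
      rw [MonoidHom.mem_ker, map_mul, ← hg]
      simp [freeGroupTranslationLift, ha]
    rw [← mul_inv_cancel_left (a l m ^ k) g]
    exact mul_mem (Subgroup.zpow_mem_zpowers _ k) (hf hker)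
  · rw [Subgroup.zpowers_le]
    exact ⟨q, (lift_a _).symm⟩

theorem isPSeparable_zpowers_a (p r : ℕ) [Fact p.Prime] (ε : ℤˣ) :
    IsPSeparable p (Subgroup.zpowers (a (p ^ r) (ε * p ^ r))) := by
  have : NeZero (p ^ r) := ⟨pow_ne_zero r (Fact.out : p.Prime).ne_zero⟩
  let q : Multiplicative (ZMod (p ^ r)) := Multiplicative.ofAdd 1
  let f := QuotientGroup.mk' (Subgroup.zpowers (a (p ^ r) (ε * p ^ r) ^ (p ^ r : ℤ)))
  have hl : q ^ (p ^ r : ℤ) = 1 := by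
    exact_mod_cast orderOf_ofAdd_one (p ^ r) ▸ pow_orderOf_eq_one q
  have hm : q ^ (ε * p ^ r : ℤ) = 1 := by rw [mul_comm, zpow_mul, hl, one_zpow]
  have hfa : orderOf (f (a (p ^ r) (ε * p ^ r))) ∣ orderOf q := by
    rw [orderOf_ofAdd_one, orderOf_dvd_iff_pow_eq_one, ← map_pow]
    refine (QuotientGroup.eq_one_iff _).2 ?_
    exact_mod_cast Subgroup.mem_zpowers _
  have hf : f.ker ≤ Subgroup.zpowers (a (p ^ r) (ε * p ^ r)) := by
    rw [QuotientGroup.ker_mk']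
    exact Subgroup.zpowers_le.2 (Subgroup.zpow_mem_zpowers _ _)
  rw [← comap_toSemidirect_range_inr (monoidHomOfForallMemZpowers (mem_zpowers_ofAdd_one _) hfa)
    q hl hm f (monoidHomOfForallMemZpowers_apply_gen _ hfa).symm hf (mem_zpowers_ofAdd_one _)]
  exact (isPSeparable_range_inr (isPGroup_multiplicative_zmod_pow p r)
    (isPSeparable_bot_freeGroup p)).comap _

end FreeGroupSemidirect

section Metacyclic

theorem exists_metacyclic_hom {C D : Type*} [CommGroup C] [Group D] (c : C) (d : D)
    (hd : ∀ x, x ∈ Subgroup.zpowers d) (l : ℤ) {ε : ℤˣ} (hε : orderOf ε ∣ orderOf d) :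
    ∃ (φ : D →* MulAut C) (f : BS l (ε * l) →* C ⋊[φ] D),
      f (a l (ε * l)) = SemidirectProduct.inl c ∧ f (b l (ε * l)) = SemidirectProduct.inr d := by
  let φ : D →* MulAut C := monoidHomOfForallMemZpowers (g' := unitsZPow C ε) hd
    ((orderOf_map_dvd _ ε).trans hε)
  have hφ : φ d = unitsZPow C ε := monoidHomOfForallMemZpowers_apply_gen _ _
  refine ⟨φ, lift (SemidirectProduct.inl c) (SemidirectProduct.inr d) ?_, lift_a _, lift_b _⟩
  rw [← map_zpow, ← map_inv, ← SemidirectProduct.inl_aut_inv, hφ, ← map_inv, Int.units_inv_eq_self,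
    unitsZPow_apply, ← map_zpow, ← zpow_mul, mul_comm]

variable {p : ℕ} [Fact p.Prime] (l : ℤ) {ε : ℤˣ}

theorem exists_isNormalOfPPowerIndex_zpow_mem_iff (u : ℕ) {n : ℕ} (hε : ε ^ p ^ n = 1) :
    ∃ K : Subgroup (BS l (ε * l)), IsNormalOfPPowerIndex p K ∧
      (∀ i : ℤ, a l (ε * l) ^ i ∈ K ↔ (p : ℤ) ^ u ∣ i) ∧
      ∀ j : ℤ, b l (ε * l) ^ j ∈ K ↔ (p : ℤ) ^ n ∣ j := by
  have (k : ℕ) : NeZero (p ^ k) := ⟨pow_ne_zero k (Fact.out : p.Prime).ne_zero⟩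
  obtain ⟨φ, f, ha, hb⟩ := exists_metacyclic_hom (Multiplicative.ofAdd (1 : ZMod (p ^ u)))
    (Multiplicative.ofAdd (1 : ZMod (p ^ n))) (mem_zpowers_ofAdd_one _) l
    (by rw [orderOf_ofAdd_one]; exact orderOf_dvd_of_pow_eq_one hε)
  have := Finite.of_equiv _ (SemidirectProduct.equivProd (φ := φ)).symm
  have hP : IsPGroup p (Multiplicative (ZMod (p ^ u)) ⋊[φ] Multiplicative (ZMod (p ^ n))) :=
    IsPGroup.of_card (n := u + n) (by
      rw [SemidirectProduct.card, pow_add]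
      exact congr_arg₂ _ (Nat.card_zmod _) (Nat.card_zmod _))
  refine ⟨f.ker, isNormalOfPPowerIndex_ker hP f, fun i => ?_, fun j => ?_⟩
  · rw [MonoidHom.mem_ker, map_zpow, ha, ← map_zpow,
      map_eq_one_iff _ SemidirectProduct.inl_injective, ← orderOf_dvd_iff_zpow_eq_one,
      orderOf_ofAdd_one, Nat.cast_pow]
  · rw [MonoidHom.mem_ker, map_zpow, hb, ← map_zpow,
      map_eq_one_iff _ SemidirectProduct.inr_injective, ← orderOf_dvd_iff_zpow_eq_one,
      orderOf_ofAdd_one, Nat.cast_pow]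

theorem a_zpow_mem_zpowers_a_pow_iff (hε : ε ^ p = 1) (s : ℕ) {i : ℤ} :
    a l (ε * l) ^ i ∈ Subgroup.zpowers (a l (ε * l) ^ p ^ s) ↔ (p : ℤ) ^ s ∣ i := by
  constructor
  · obtain ⟨K, -, hK, -⟩ :=
      exists_isNormalOfPPowerIndex_zpow_mem_iff l s (n := 1) (by rwa [pow_one])
    have hle : Subgroup.zpowers (a l (ε * l) ^ p ^ s) ≤ K :=
      Subgroup.zpowers_le.2 (mod_cast (hK (p ^ s)).2 dvd_rfl)
    exact fun hi => (hK i).1 (hle hi)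
  · rintro ⟨j, rfl⟩
    exact ⟨j, by simp [zpow_mul, ← zpow_natCast]⟩

end Metacyclic

section Separability

variable {p : ℕ} [Fact p.Prime] (r : ℕ) {ε : ℤˣ}

theorem isPSeparable_zpowers_a_pow (hε : ε ^ p = 1) (s : ℕ) :
    IsPSeparable p (Subgroup.zpowers (a (p ^ r) (ε * p ^ r) ^ p ^ s)) := by
  obtain ⟨K, hK, hKa, -⟩ :=
    exists_isNormalOfPPowerIndex_zpow_mem_iff (p ^ r) s (n := 1) (by rwa [pow_one])
  have h : Subgroup.zpowers (a (p ^ r) (ε * p ^ r) ^ p ^ s) =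
      Subgroup.zpowers (a (p ^ r) (ε * p ^ r)) ⊓ K := by
    apply le_antisymm
    · rw [Subgroup.zpowers_le]
      exact ⟨Subgroup.npow_mem_zpowers _ _, mod_cast (hKa (p ^ s)).2 dvd_rfl⟩
    · rintro _ ⟨⟨i, rfl⟩, hi⟩
      exact (a_zpow_mem_zpowers_a_pow_iff _ hε s).2 ((hKa i).1 hi)
  rw [h]
  exact (isPSeparable_zpowers_a p r ε).inf (.of_isNormalOfPPowerIndex hK)

theorem isPSeparable_bot (hε : ε ^ p = 1) :
    IsPSeparable p (⊥ : Subgroup (BS (p ^ r) (ε * p ^ r))) := by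
  have h : ⨅ s : ℕ, Subgroup.zpowers (a (p ^ r) (ε * p ^ r) ^ p ^ s) = ⊥ := by
    refine eq_bot_iff.2 fun g hg => ?_
    rw [Subgroup.mem_iInf] at hg
    obtain ⟨i, rfl⟩ : g ∈ Subgroup.zpowers (a (p ^ r) (ε * p ^ r)) := by simpa using hg 0
    have hi : (p : ℤ) ^ i.natAbs ∣ i := (a_zpow_mem_zpowers_a_pow_iff _ hε _).1 (hg i.natAbs)
    have hlt : |i| < (p : ℤ) ^ i.natAbs := by
      rw [Int.abs_eq_natAbs]
      exact_mod_cast Nat.lt_pow_self (Fact.out : p.Prime).one_lt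
    simp [Int.eq_zero_of_abs_lt_dvd hi hlt]
  exact h ▸ .iInf (isPSeparable_zpowers_a_pow r hε)

theorem isPSeparable_zpowers_b (hε : ε ^ p = 1) :
    IsPSeparable p (Subgroup.zpowers (b (p ^ r) (ε * p ^ r))) := by
  let ρ : BS (p ^ r) (ε * p ^ r) →* Subgroup.zpowers (b (p ^ r) (ε * p ^ r)) :=
    lift 1 ⟨_, Subgroup.mem_zpowers _⟩ (by simp)
  refine (isPSeparable_bot r hε).of_retraction ρ ?_
  rintro ⟨_, k, rfl⟩
  exact Subtype.ext (by simp [ρ])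

end Separability

theorem exists_isNormalOfPPowerIndex_compatible_le {p : ℕ} [Fact p.Prime] (l : ℤ) {ε : ℤˣ}
    (hε : ε ^ p = 1) {s : ℕ}
    {φ : Subgroup.zpowers (a l (ε * l) ^ p ^ s) ≃* Subgroup.zpowers (b l (ε * l))}
    (hφ : (φ ⟨_, Subgroup.mem_zpowers _⟩ : BS l (ε * l)) = b l (ε * l))
    {M : Subgroup (BS l (ε * l))} (hM : IsNormalOfPPowerIndex p M) :
    ∃ N, IsNormalOfPPowerIndex p N ∧ Compatible φ N ∧ N ≤ M := by
  have := hM.normal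
  obtain ⟨t, ht⟩ := hM.exists_index_eq
  obtain ⟨K, hK, ha, hb⟩ := exists_isNormalOfPPowerIndex_zpow_mem_iff l (s + (t + 1)) (n := t + 1)
    (show ε ^ p ^ (t + 1) = 1 by rw [pow_succ', pow_mul, hε, one_pow])
  have hpow (x : BS l (ε * l)) {j : ℤ} (hj : (p : ℤ) ^ (t + 1) ∣ j) : x ^ j ∈ M := by
    obtain ⟨c, rfl⟩ := (pow_dvd_pow (p : ℤ) t.le_succ).trans hj
    rw [zpow_mul]
    exact M.zpow_mem (by exact_mod_cast ht ▸ M.pow_index_mem x) c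
  have haK (j : ℤ) : (a l (ε * l) ^ p ^ s) ^ j ∈ K ↔ (p : ℤ) ^ (t + 1) ∣ j := by
    rw [← zpow_natCast, ← zpow_mul, ha, Nat.cast_pow, pow_add]
    exact mul_dvd_mul_iff_left (pow_ne_zero s (mod_cast (Fact.out : p.Prime).ne_zero))
  refine ⟨M ⊓ K, hM.inf hK, compatible_of_zpow_mem_iff hφ fun j => ?_, inf_le_left⟩
  rw [Subgroup.mem_inf, Subgroup.mem_inf, haK, hb]
  exact and_congr_left fun hj => iff_of_true (hpow _ hj) (hpow _ hj)

end BS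

/-- **Lemma 3.1.** Let `G = ⟨a, b; b⁻¹a^{pʳ}b = a^{ε·pʳ}⟩` with `ε = ±1` (and `p = 2` if
`ε = -1`), let `A₁ = ⟨a^{pˢ}⟩` and `B = ⟨b⟩`, and let `φ : A₁ ≃* B` be the isomorphism with
`φ(a^{pˢ}) = b`. Then the family of all normal `(A₁,B,φ)`-compatible subgroups of `G` of
finite `p`-power index is an `(A₁,B)`-filtration: the intersection of all its members is
trivial and the intersections `∩_N A₁N = A₁` and `∩_N BN = B` hold. -/
theorem bs_compatible_normal_family_filtration
    (p : ℕ) (hp : p.Prime) (r s : ℕ) (ε : ℤ) (hε : ε = 1 ∨ ε = -1)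
    (hp2 : ε = -1 → p = 2)
    (l m : ℤ) (hl : l = (p : ℤ) ^ r) (hm : m = ε * (p : ℤ) ^ r)
    (A₁ B : Subgroup (BS l m))
    (hA₁ : A₁ = Subgroup.zpowers (BS.a l m ^ p ^ s))
    (hB : B = Subgroup.zpowers (BS.b l m))
    (φ : A₁ ≃* B)
    (hφ : ∀ x : A₁, (x : BS l m) = BS.a l m ^ p ^ s → (φ x : BS l m) = BS.b l m) :
    sInf {N : Subgroup (BS l m) | N.Normal ∧ Compatible φ N ∧ ∃ k : ℕ, N.index = p ^ k} = ⊥ ∧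
    (⨅ N ∈ {N : Subgroup (BS l m) | N.Normal ∧ Compatible φ N ∧ ∃ k : ℕ, N.index = p ^ k},
      A₁ ⊔ N) = A₁ ∧
    (⨅ N ∈ {N : Subgroup (BS l m) | N.Normal ∧ Compatible φ N ∧ ∃ k : ℕ, N.index = p ^ k},
      B ⊔ N) = B := by
  have := Fact.mk hp
  obtain ⟨ε, rfl⟩ := Int.isUnit_iff.2 hε
  have hεp : ε ^ p = 1 := by
    rcases Int.units_eq_one_or ε with rfl | rfl
    · exact one_pow p
    · rw [hp2 rfl]; exact neg_one_sq
  subst hl hm hA₁ hB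
  have hcofinal (M) (hM : IsNormalOfPPowerIndex p M) :
      ∃ N ∈ {N | N.Normal ∧ Compatible φ N ∧ ∃ k : ℕ, N.index = p ^ k}, N ≤ M := by
    obtain ⟨N, hN, hφN, hNM⟩ :=
      BS.exists_isNormalOfPPowerIndex_compatible_le (p ^ r) hεp (hφ _ rfl) hM
    exact ⟨N, ⟨hN.normal, hφN, hN.exists_index_eq⟩, hNM⟩
  refine ⟨?_, (BS.isPSeparable_zpowers_a_pow r hεp s).iInf_sup_eq hcofinal,
    (BS.isPSeparable_zpowers_b r hεp).iInf_sup_eq hcofinal⟩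
  rw [sInf_eq_iInf, ← (BS.isPSeparable_bot r hεp).iInf_sup_eq hcofinal]
  simp only [bot_sup_eq]
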